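/- arXiv:1208.2298 — 5 statements merged into one kernel-verified Lean document; each statement's English description precedes it below -/
import Mathlib

section
/- The set $\{\,(x^2+y^2+z^2,\ \sqrt{6}(x^3+y^3+z^3)) : x,y,z \in \mathbb{R},\ x+y+z=0\,\}$ is equal to the set $\{(a,b) \in \mathbb{R}^2 : b^2 \le a^3\}$. -/
/-!
On the plane `x + y + z = 0` the difference `q₁³ - q₂²` is twice the discriminant
`((x - y)(y - z)(z - x))²`, which gives one inclusion. Conversely, the point at distance `r` from
the origin with polar angle `φ` in that plane has `q₁ = r²` and `q₂ = r³ cos (3φ)`. So, given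
`b² ≤ a³`, take `r = √a` and `φ = arccos (b / r³) / 3`.
-/

theorem stmt_2 :
    {p : ℝ × ℝ | ∃ x y z : ℝ, x + y + z = 0 ∧
      p = (x^2 + y^2 + z^2, Real.sqrt 6 * (x^3 + y^3 + z^3))} =
    {p : ℝ × ℝ | p.2^2 ≤ p.1^3} := by
  ext ⟨a, b⟩
  simp only [Set.mem_ofPred_eq, Prod.mk.injEq]
  have h6 : Real.sqrt 6 ^ 2 = 6 := Real.sq_sqrt (by norm_num)
  constructor
  · rintro ⟨x, y, z, h, rfl, rfl⟩
    obtain rfl : z = -x - y := by linarith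
    rw [mul_pow, h6]
    nlinarith [sq_nonneg ((x - y) * (y - (-x - y)) * ((-x - y) - x))]
  · intro h
    have ha : 0 ≤ a := by
      by_contra! hneg
      nlinarith [sq_nonneg b, Odd.pow_neg (n := 3) (by decide) hneg]
    obtain ⟨r, hr, rfl⟩ : ∃ r : ℝ, 0 ≤ r ∧ a = r ^ 2 :=
      ⟨√a, Real.sqrt_nonneg a, (Real.sq_sqrt ha).symm⟩
    have hb : |b| ≤ r ^ 3 :=
      abs_le_of_sq_le_sq (h.trans_eq (by ring)) (pow_nonneg hr 3)
    obtain ⟨φ, hφ⟩ : ∃ φ : ℝ, b = r ^ 3 * Real.cos (3 * φ) := by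
      rcases hr.eq_or_lt with rfl | hpos
      · exact ⟨0, by simpa using hb⟩
      · have h3 : 0 < r ^ 3 := by positivity
        refine ⟨Real.arccos (b / r ^ 3) / 3, ?_⟩
        rw [mul_div_cancel₀ _ (by norm_num), Real.cos_arccos]
        · field_simp
        · rw [le_div_iff₀ h3]; linarith [(abs_le.mp hb).1]
        · rw [div_le_one h3]; exact (abs_le.mp hb).2
    have h2 : Real.sqrt 2 ^ 2 = 2 := Real.sq_sqrt (by norm_num)
    have hS := Real.sin_sq_add_cos_sq φ
    rw [Real.cos_three_mul] at hφ
    -- Coordinates along the orthonormal basis `(2, -1, -1) / √6`, `(0, 1, -1) / √2` of the plane.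
    obtain ⟨u, hu⟩ : ∃ u, u = √6 / 6 * (r * Real.cos φ) := ⟨_, rfl⟩
    obtain ⟨v, hv⟩ : ∃ v, v = √2 / 2 * (r * Real.sin φ) := ⟨_, rfl⟩
    have hu1 : √6 * u = r * Real.cos φ := by
      rw [hu]; linear_combination (r * Real.cos φ) / 6 * h6
    have hu2 : u ^ 2 = r ^ 2 * Real.cos φ ^ 2 / 6 := by
      rw [hu]; linear_combination (r * Real.cos φ) ^ 2 / 36 * h6
    have hv2 : v ^ 2 = r ^ 2 * (1 - Real.cos φ ^ 2) / 2 := by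
      rw [hv]; linear_combination (r * Real.sin φ) ^ 2 / 4 * h2 + r ^ 2 / 2 * hS
    refine ⟨2 * u, -u + v, -u - v, by ring, ?_, ?_⟩
    · linear_combination -6 * hu2 - 2 * hv2
    · calc b = 6 * (r * Real.cos φ) * (r ^ 2 * Real.cos φ ^ 2 / 6
              - r ^ 2 * (1 - Real.cos φ ^ 2) / 2) := by rw [hφ]; ring
        _ = 6 * (√6 * u) * (u ^ 2 - v ^ 2) := by rw [hu1, hu2, hv2]
        _ = _ := by ring
end

section
/- The set $\{\,\sqrt{6}(x^3+y^3+z^3) : x,y,z \in \mathbb{R},\ x+y+z=0,\ x^2+y^2+z^2=1\,\}$ is equal to the interval $[-1, 1]$. -/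
/-!
With `x + y + z = 0` and `x² + y² + z² = 1`, the value `b = √6 (x³ + y³ + z³)` satisfies
`1 - b² = 2 ((x - y)(y - z)(z - x))²`, the discriminant of the cubic with roots `x, y, z`;
hence `|b| ≤ 1`. Conversely, parametrizing the circle by an angle `θ`, with `x, y, z` equal to
`√(2/3)` times the cosines of `θ`, `θ + 2π/3`, `θ - 2π/3`, gives `b = cos (3θ)`, so
`θ = arccos b / 3` attains any `b ∈ [-1, 1]`.
-/

theorem stmt_3 :
    {b : ℝ | ∃ x y z : ℝ, x + y + z = 0 ∧ x^2 + y^2 + z^2 = 1 ∧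
      b = Real.sqrt 6 * (x^3 + y^3 + z^3)} = Set.Icc (-1 : ℝ) 1 := by
  have h6 : Real.sqrt 6 ^ 2 = 6 := Real.sq_sqrt (by norm_num)
  have h3 : Real.sqrt 3 ^ 2 = 3 := Real.sq_sqrt (by norm_num)
  have h60 : Real.sqrt 6 ≠ 0 := by positivity
  ext b
  simp only [Set.mem_setOf_eq, Set.mem_Icc]
  constructor
  · rintro ⟨x, y, z, h0, h1, hb⟩
    obtain rfl : z = -x - y := by linarith
    have hq : x ^ 2 + x * y + y ^ 2 = 1 / 2 := by linarith
    have hb2 : b ^ 2 = 6 * (x ^ 3 + y ^ 3 + (-x - y) ^ 3) ^ 2 := by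
      rw [hb, mul_pow, h6]
    have hd : 1 - b ^ 2 = 2 * ((x - y) * (y - (-x - y)) * ((-x - y) - x)) ^ 2 := by
      -- homogenize the constant: `1 = 8 (x² + xy + y²)³`
      have h8 : (1 : ℝ) = 8 * (x ^ 2 + x * y + y ^ 2) ^ 3 := by rw [hq]; norm_num
      rw [hb2]
      linear_combination h8
    have : b ^ 2 ≤ 1 := by
      linarith [sq_nonneg ((x - y) * (y - (-x - y)) * ((-x - y) - x))]
    exact abs_le.mp ((sq_le_one_iff_abs_le_one b).mp this)
  · rintro ⟨hl, hu⟩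
    have hc : Real.cos (3 * (Real.arccos b / 3)) = b := by
      rw [mul_div_cancel₀ _ (by norm_num : (3 : ℝ) ≠ 0), Real.cos_arccos hl hu]
    rw [Real.cos_three_mul] at hc
    have hs := Real.sin_sq_add_cos_sq (Real.arccos b / 3)
    set c := Real.cos (Real.arccos b / 3)
    set s := Real.sin (Real.arccos b / 3)
    refine ⟨2 * c / √6, (-c - √3 * s) / √6, (-c + √3 * s) / √6, by ring, ?_, ?_⟩
    · simp only [div_pow, h6]
      linear_combination (s ^ 2 / 3) * h3 + hs
    · have hcube : √6 ^ 3 = 6 * √6 := by rw [pow_succ, h6]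
      simp only [div_pow, hcube]
      field_simp
      linear_combination (-6) * hc + 6 * c * s ^ 2 * h3 + 18 * c * hs
end

section
/- The map $(r, \theta) \mapsto (r^2, r^3 \sin(3\theta))$ is a bijection from $(0, \infty) \times (-\pi/6, \pi/6)$ onto the set $\{(a, b) \in \mathbb{R}^2 : b^2 < a^3\}$. -/
/-! The first coordinate `r ^ 2` determines `r > 0`. For fixed `r`, the angle `3 * θ` ranges over
`(-π/2, π/2)`, on which `sin` is a bijection onto `(-1, 1)` with inverse `arcsin`; hence
`b = r ^ 3 * sin (3 * θ)` ranges bijectively over `b ^ 2 < r ^ 6 = a ^ 3`. -/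

theorem stmt_6 :
    Set.BijOn (fun p : ℝ × ℝ => (p.1^2, p.1^3 * Real.sin (3 * p.2)))
      (Set.Ioi (0 : ℝ) ×ˢ Set.Ioo (-(Real.pi / 6)) (Real.pi / 6))
      {q : ℝ × ℝ | q.2^2 < q.1^3} := by
  refine ⟨?_, ?_, ?_⟩
  · rintro ⟨r, θ⟩ ⟨hr, hθ₁, hθ₂⟩
    simp only [Set.mem_Ioi] at hr hθ₁ hθ₂
    have hcos : 0 < Real.cos (3 * θ) :=
      Real.cos_pos_of_mem_Ioo ⟨by linarith, by linarith⟩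
    have hpos : 0 < (r ^ 3 * Real.cos (3 * θ)) ^ 2 := by positivity
    have hid : (r ^ 2) ^ 3 - (r ^ 3 * Real.sin (3 * θ)) ^ 2
        = (r ^ 3 * Real.cos (3 * θ)) ^ 2 := by
      linear_combination (-r ^ 6) * Real.sin_sq_add_cos_sq (3 * θ)
    simp only [Set.mem_ofPred_eq]
    linarith
  · rintro ⟨r, θ⟩ ⟨hr, hθ₁, hθ₂⟩ ⟨s, φ⟩ ⟨hs, hφ₁, hφ₂⟩ h
    simp only [Set.mem_Ioi, Prod.mk.injEq] at hr hθ₁ hθ₂ hs hφ₁ hφ₂ h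
    obtain ⟨h₁, h₂⟩ := h
    obtain rfl : r = s := (pow_left_inj₀ hr.le hs.le two_ne_zero).mp h₁
    have hsin : Real.sin (3 * θ) = Real.sin (3 * φ) :=
      mul_left_cancel₀ (pow_pos hr 3).ne' h₂
    have hangle : 3 * θ = 3 * φ :=
      Real.injOn_sin ⟨by linarith, by linarith⟩ ⟨by linarith, by linarith⟩ hsin
    exact Prod.ext rfl (by simpa using hangle)
  · rintro ⟨a, b⟩ hab
    simp only [Set.mem_ofPred_eq] at hab
    have ha : 0 < a := by
      have h3 : 0 < a ^ 3 := (sq_nonneg b).trans_lt hab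
      exact (Odd.pow_pos_iff (by decide)).mp h3
    obtain ⟨r, hr, rfl⟩ : ∃ r : ℝ, 0 < r ∧ r ^ 2 = a :=
      ⟨√a, Real.sqrt_pos.mpr ha, Real.sq_sqrt ha.le⟩
    have hr3 : 0 < r ^ 3 := pow_pos hr 3
    have hb : |b| < r ^ 3 := abs_lt_of_sq_lt_sq (by linarith [pow_mul r 2 3, pow_mul r 3 2]) hr3.le
    obtain ⟨hb₁, hb₂⟩ := abs_lt.mp hb
    have hlo : -1 < b / r ^ 3 := by rw [lt_div_iff₀ hr3]; linarith
    have hhi : b / r ^ 3 < 1 := by rw [div_lt_one hr3]; exact hb₂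
    have h₁ := Real.neg_pi_div_two_lt_arcsin.mpr hlo
    have h₂ := Real.arcsin_lt_pi_div_two.mpr hhi
    refine ⟨(r, Real.arcsin (b / r ^ 3) / 3), ⟨hr, ?_, ?_⟩, ?_⟩
    · change -(Real.pi / 6) < Real.arcsin (b / r ^ 3) / 3
      linarith
    · change Real.arcsin (b / r ^ 3) / 3 < Real.pi / 6
      linarith
    · simp only [Prod.mk.injEq, true_and]
      rw [mul_div_cancel₀ _ (three_ne_zero), Real.sin_arcsin hlo.le hhi.le,
        mul_div_cancel₀ _ hr3.ne']
end

section
/- Let $A \in M_3(\mathbb{C})$ satisfy $A + A^* = 0$ and $\mathrm{tr}(A) = 0$, where $A^*$ is the conjugate transpose. Then $6\,(\mathrm{Im}\,\mathrm{tr}(A^3))^2 \le (-\mathrm{Re}\,\mathrm{tr}(A^2))^3$. -/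
/-!
The matrix `H = i A` is Hermitian and traceless, so it is unitarily diagonalizable with real
eigenvalues `a, b, c` satisfying `a + b + c = 0`. Since `A = -i H`, one has
`-tr (A ^ 2) = a ^ 2 + b ^ 2 + c ^ 2` and `tr (A ^ 3) = i (a ^ 3 + b ^ 3 + c ^ 3)`.
The claim becomes `6 (a ^ 3 + b ^ 3 + c ^ 3) ^ 2 ≤ (a ^ 2 + b ^ 2 + c ^ 2) ^ 3`, and the difference
of the two sides is twice the discriminant `((a - b) (b - c) (c - a)) ^ 2` of the characteristic
polynomial of `H`.
-/

open Matrix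

lemma six_mul_sum_cubes_sq_le {a b c : ℝ} (h : a + b + c = 0) :
    6 * (a ^ 3 + b ^ 3 + c ^ 3) ^ 2 ≤ (a ^ 2 + b ^ 2 + c ^ 2) ^ 3 := by
  obtain rfl : c = -a - b := by linarith
  have key : (a ^ 2 + b ^ 2 + (-a - b) ^ 2) ^ 3 - 6 * (a ^ 3 + b ^ 3 + (-a - b) ^ 3) ^ 2
      = 2 * ((a - b) * (b - (-a - b)) * ((-a - b) - a)) ^ 2 := by ring
  have := sq_nonneg ((a - b) * (b - (-a - b)) * ((-a - b) - a))
  linarith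

lemma trace_pow_eq_sum_eigenvalues_pow {n : Type*} [Fintype n] [DecidableEq n]
    {H : Matrix n n ℂ} (hH : H.IsHermitian) (k : ℕ) :
    trace (H ^ k) = ∑ i, (hH.eigenvalues i : ℂ) ^ k := by
  conv_lhs => rw [hH.spectral_theorem, ← map_pow, Unitary.conjStarAlgAut_apply, trace_mul_cycle]
  simp [diagonal_pow, trace_diagonal]

theorem stmt_13 (A : Matrix (Fin 3) (Fin 3) ℂ) (hA : A + Aᴴ = 0)
    (htr : Matrix.trace A = 0) :
    6 * (Matrix.trace (A ^ 3)).im ^ 2 ≤ (-(Matrix.trace (A ^ 2)).re) ^ 3 := by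
  have hH : (Complex.I • A).IsHermitian := by
    rw [IsHermitian, conjTranspose_smul, eq_neg_of_add_eq_zero_right hA]
    simp
  have h1 := trace_pow_eq_sum_eigenvalues_pow hH 1
  have h2 := trace_pow_eq_sum_eigenvalues_pow hH 2
  have h3 := trace_pow_eq_sum_eigenvalues_pow hH 3
  generalize hH.eigenvalues = l at h1 h2 h3
  simp only [smul_pow, trace_smul, pow_one, htr, Fin.sum_univ_three, Complex.I_sq,
    Complex.I_pow_three, smul_eq_mul, mul_zero] at h1 h2 h3
  norm_cast at h1 h2 h3
  have e3 : (trace (A ^ 3)).im = l 0 ^ 3 + l 1 ^ 3 + l 2 ^ 3 := by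
    simpa [← Complex.ofReal_pow] using congrArg Complex.re h3
  have e2 : -(trace (A ^ 2)).re = l 0 ^ 2 + l 1 ^ 2 + l 2 ^ 2 := by
    simpa [← Complex.ofReal_pow] using congrArg Complex.re h2
  rw [e3, e2]
  exact six_mul_sum_cubes_sq_le h1.symm
end

section
/- The set $\{\,(-\mathrm{Re}\,\mathrm{tr}(A^2),\ \sqrt{6}\,\mathrm{Im}\,\mathrm{tr}(A^3)) : A \in M_3(\mathbb{C}),\ A + A^* = 0,\ \mathrm{tr}(A) = 0\,\}$ is equal to the set $\{(a,b) \in \mathbb{R}^2 : b^2 \le a^3\}$. -/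
/-!
An element of `𝔰𝔲(3)` is `-i` times a traceless Hermitian matrix `H`. If `x, y, z` are the (real)
eigenvalues of `H`, then `x + y + z = 0` and the two invariants are `a = x² + y² + z²` and
`b = √6 (x³ + y³ + z³)`. Since `x + y + z = 0`, the number `a³ - b²` is twice the discriminant
`((x - y) (y - z) (z - x))²` of the characteristic polynomial, hence nonnegative
(`six_mul_sq_sum_cubes_le`).

Conversely, if `b² ≤ a³`, put `s = √a` and write `b = s³ cos (3θ)`. The three numbers
`√(2/3) s cos (θ + 2πk/3)` have sum `0`, sum of squares `a` and `√6` times the sum of cubes equal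
to `b` (`exists_eigenvalues`), so a diagonal matrix has the prescribed invariants.
-/

/-- The trace of a power of a Hermitian matrix is the corresponding power sum of its
eigenvalues. -/
lemma trace_pow_eq_sum_eigenvalues {H : Matrix (Fin 3) (Fin 3) ℂ} (hH : H.IsHermitian) (n : ℕ) :
    Matrix.trace (H ^ n) = ((∑ i, hH.eigenvalues i ^ n : ℝ) : ℂ) := by
  conv_lhs => rw [hH.spectral_theorem]
  rw [← map_pow, Unitary.conjStarAlgAut_apply, Matrix.trace_mul_cycle, Unitary.coe_star_mul_self,
    one_mul, Matrix.diagonal_pow, Matrix.trace_diagonal]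
  simp

/-- Nonnegativity of the discriminant of a real-rooted depressed cubic, in terms of power sums. -/
lemma six_mul_sq_sum_cubes_le {x y z : ℝ} (h : x + y + z = 0) :
    6 * (x ^ 3 + y ^ 3 + z ^ 3) ^ 2 ≤ (x ^ 2 + y ^ 2 + z ^ 2) ^ 3 := by
  obtain rfl : z = -x - y := by linarith
  nlinarith [sq_nonneg ((x - y) * (y - (-x - y)) * ((-x - y) - x))]

lemma exists_eigenvalues {a b : ℝ} (h : b ^ 2 ≤ a ^ 3) :
    ∃ x y z : ℝ, x + y + z = 0 ∧ x ^ 2 + y ^ 2 + z ^ 2 = a ∧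
      Real.sqrt 6 * (x ^ 3 + y ^ 3 + z ^ 3) = b := by
  have ha : 0 ≤ a := by
    by_contra! hneg
    nlinarith [sq_nonneg b, Odd.pow_neg (n := 3) (by decide) hneg]
  obtain ⟨s, hs, rfl⟩ : ∃ s : ℝ, 0 ≤ s ∧ s ^ 2 = a := ⟨√a, Real.sqrt_nonneg a, Real.sq_sqrt ha⟩
  have hb : |b| ≤ s ^ 3 := abs_le_of_sq_le_sq (by linarith [pow_right_comm s 2 3]) (by positivity)
  obtain ⟨hb1, hb2⟩ := abs_le.mp hb
  obtain ⟨θ, hθ⟩ : ∃ θ : ℝ, s ^ 3 * Real.cos (3 * θ) = b := by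
    refine ⟨Real.arccos (b / s ^ 3) / 3, ?_⟩
    rcases hs.eq_or_lt with rfl | hpos
    · norm_num at hb1 hb2 ⊢
      linarith
    · have hp : 0 < s ^ 3 := by positivity
      rw [mul_div_cancel₀ _ (by norm_num : (3 : ℝ) ≠ 0), Real.cos_arccos]
      · field_simp
      · rw [le_div_iff₀ hp]; linarith
      · rw [div_le_one hp]; exact hb2
  have h6 : √6 ^ 2 = (6 : ℝ) := Real.sq_sqrt (by norm_num)
  have h3 : √3 ^ 2 = (3 : ℝ) := Real.sq_sqrt (by norm_num)
  have hcs := Real.sin_sq_add_cos_sq θ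
  rw [Real.cos_three_mul] at hθ
  generalize Real.cos θ = c at *
  generalize Real.sin θ = t at *
  generalize √(6 : ℝ) = q at *
  generalize √(3 : ℝ) = w at *
  -- `√(2/3) = √6 / 3`, and the cosines of `θ ± 2π/3` are `-c / 2 ∓ √3 t / 2`.
  refine ⟨q / 3 * s * c, q / 3 * s * (-c / 2 - w / 2 * t), q / 3 * s * (-c / 2 + w / 2 * t),
    by ring, ?_, ?_⟩
  · linear_combination s ^ 2 * (c ^ 2 / 6 + w ^ 2 * t ^ 2 / 18) * h6
      + s ^ 2 * t ^ 2 / 3 * h3 + s ^ 2 * hcs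
  · have e : q * ((q / 3 * s * c) ^ 3 + (q / 3 * s * (-c / 2 - w / 2 * t)) ^ 3
        + (q / 3 * s * (-c / 2 + w / 2 * t)) ^ 3)
        = (q ^ 2) ^ 2 * s ^ 3 / 36 * (c ^ 3 - w ^ 2 * t ^ 2 * c) := by ring
    rw [e, h6, h3, ← hθ]
    linear_combination -3 * s ^ 3 * c * hcs

open Matrix

theorem stmt_14 :
    {p : ℝ × ℝ | ∃ A : Matrix (Fin 3) (Fin 3) ℂ, A + Aᴴ = 0 ∧ Matrix.trace A = 0 ∧
      p = (-(Matrix.trace (A ^ 2)).re, Real.sqrt 6 * (Matrix.trace (A ^ 3)).im)} =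
    {p : ℝ × ℝ | p.2^2 ≤ p.1^3} := by
  ext ⟨a, b⟩
  simp only [Set.mem_ofPred_eq, Prod.mk.injEq]
  constructor
  · rintro ⟨A, hA, htr, rfl, rfl⟩
    have hH : (Complex.I • A).IsHermitian := by
      rw [Matrix.IsHermitian, Matrix.conjTranspose_smul, eq_neg_of_add_eq_zero_right hA]
      simp
    have h1 := trace_pow_eq_sum_eigenvalues hH 1
    have h2 := trace_pow_eq_sum_eigenvalues hH 2
    have h3 := trace_pow_eq_sum_eigenvalues hH 3
    rw [pow_one, Matrix.trace_smul, htr, smul_zero] at h1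
    rw [smul_pow, Matrix.trace_smul] at h2 h3
    have e1 := congrArg Complex.re h1
    have e2 := congrArg Complex.re h2
    have e3 := congrArg Complex.re h3
    rw [Complex.ofReal_re, Fin.sum_univ_three] at e1 e2 e3
    simp only [pow_one, Complex.zero_re] at e1
    simp only [Complex.I_sq, neg_smul, one_smul, Complex.neg_re] at e2
    simp only [Complex.I_pow_three, smul_eq_mul, neg_mul, Complex.neg_re, Complex.I_mul_re,
      neg_neg] at e3
    rw [e2, e3, mul_pow, Real.sq_sqrt (by norm_num)]
    exact six_mul_sq_sum_cubes_le e1.symm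
  · intro h
    obtain ⟨x, y, z, h1, h2, h3⟩ := exists_eigenvalues h
    refine ⟨Matrix.diagonal fun i => -Complex.I * ((![x, y, z] i : ℝ) : ℂ), ?_, ?_, ?_, ?_⟩
    · rw [Matrix.diagonal_conjTranspose, Matrix.diagonal_add, Matrix.diagonal_eq_zero]
      ext i
      simp
    · rw [Matrix.trace_diagonal, ← Finset.mul_sum, ← Complex.ofReal_sum, Fin.sum_univ_three]
      simp [h1]
    · rw [Matrix.diagonal_pow, Matrix.trace_diagonal]
      simp only [Pi.pow_apply, mul_pow, neg_sq, Complex.I_sq, ← Complex.ofReal_pow]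
      rw [← Finset.mul_sum, ← Complex.ofReal_sum, Fin.sum_univ_three]
      simpa [-Complex.ofReal_pow] using h2.symm
    · have hI : (-Complex.I) ^ 3 = Complex.I := by rw [Odd.neg_pow (by decide), Complex.I_pow_three, neg_neg]
      rw [Matrix.diagonal_pow, Matrix.trace_diagonal]
      simp only [Pi.pow_apply, mul_pow, hI, ← Complex.ofReal_pow]
      rw [← Finset.mul_sum, ← Complex.ofReal_sum, Fin.sum_univ_three, Complex.I_mul_im,
        Complex.ofReal_re]
      exact h3.symm
end
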